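/- (Corollary 2: the Walrasian price is the gradient of utilitarian social welfare.) Consider an exchange economy with N consumers with utility functions u_i. Let α_i > 0, let w ∈ ℝ^K with w_k > 0 for all k, let x be feasible for w (each x_i ≥ 0, Σ_i x_i ≤ w), let p ≥ 0 be such that for each i the supremum defining v̄_i(p/α_i) is attained, and suppose Y_α(x,p,w) = 0. Define W_α(w') := sup { Σ_i α_i·u_i(x'_i) : x' feasible for w' } for w' ≥ 0. Then: (i) W_α(w) = Σ_i α_i·u_i(x_i); (ii) p is a supergradient of the concave function W_α at w: W_α(w') ≤ W_α(w) + ⟨p, w' − w⟩ for every w' ≥ 0; and (iii) if W_α has a gradient g at w, then g = p. -/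

import Mathlib

noncomputable section

/-- Inner product on `ℝ^K`. -/
def dot {K : ℕ} (p x : Fin K → ℝ) : ℝ := ∑ k, p k * x k

/-- A utility function: continuous, strictly increasing and strictly concave
on the nonnegative orthant. -/
structure IsUtility {K : ℕ} (u : (Fin K → ℝ) → ℝ) : Prop where
  continuousOn : ContinuousOn u {x : Fin K → ℝ | ∀ k, 0 ≤ x k}
  strictMono : ∀ x y : Fin K → ℝ, (∀ k, 0 ≤ x k) → (∀ k, 0 ≤ y k) →
    (∀ k, x k ≤ y k) → x ≠ y → u x < u y
  strictConcaveOn : StrictConcaveOn ℝ {x : Fin K → ℝ | ∀ k, 0 ≤ x k} u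

/-- The Fenchel dual `v̄(q) = sup { u(x) − ⟨q,x⟩ : x ≥ 0 }`. -/
def fenchelDual {K : ℕ} (u : (Fin K → ℝ) → ℝ) (q : Fin K → ℝ) : ℝ :=
  sSup ((fun x => u x - dot q x) '' {x : Fin K → ℝ | ∀ k, 0 ≤ x k})

/-- The economy's potential
`Y_α(x,p,w) = Σ_i α_i·u_i(x_i) − ⟨p,w⟩ − Σ_i α_i·v̄_i(p/α_i)`. -/
def potential {N K : ℕ} (u : Fin N → (Fin K → ℝ) → ℝ) (α : Fin N → ℝ)
    (x : Fin N → Fin K → ℝ) (p w : Fin K → ℝ) : ℝ :=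
  ∑ i, α i * u i (x i) - dot p w -
    ∑ i, α i * fenchelDual (u i) (fun k => p k / α i)

/-!
By the Fenchel–Young inequality, the dual bound `⟨p, w'⟩ + Σ_i α_i v̄_i(p/α_i)` dominates the
welfare of every allocation feasible for `w'`: this is `Y_α(x', p, w') ≤ 0`. The bound is affine
in `w'` with slope `p`, and `Y_α(x, p, w) = 0` says that it touches welfare at `w`. Hence `p` is a
supergradient of `W_α` at `w`, and at an interior point a supergradient must equal the gradient.
-/

open scoped Topology

section Supergradient

variable {E : Type*} [NormedAddCommGroup E] [NormedSpace ℝ E]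

theorem eq_of_hasFDerivAt_of_eventually_le_add {f : E → ℝ} {f' L : E →L[ℝ] ℝ} {a : E}
    (hf : HasFDerivAt f f' a) (hL : ∀ᶠ y in 𝓝 a, f y ≤ f a + L (y - a)) : f' = L := by
  have hmax : IsLocalMax (fun y => f y - L y) a := by
    filter_upwards [hL] with y hy
    rw [map_sub] at hy
    linarith
  exact sub_eq_zero.1 (hmax.hasFDerivAt_eq_zero (hf.sub L.hasFDerivAt))

end Supergradient

section ExchangeEconomy

variable {N K : ℕ}

theorem dot_eq_dotProduct (p x : Fin K → ℝ) : dot p x = p ⬝ᵥ x := rfl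

theorem dot_sub (p x y : Fin K → ℝ) : dot p (x - y) = dot p x - dot p y :=
  dotProduct_sub p x y

theorem sum_smul_proj_apply (g x : Fin K → ℝ) :
    (∑ k, g k • (ContinuousLinearMap.proj k : (Fin K → ℝ) →L[ℝ] ℝ)) x = dot g x := by
  simp [dot]

theorem mul_dot_div {a : ℝ} (ha : a ≠ 0) (p x : Fin K → ℝ) :
    a * dot (fun k => p k / a) x = dot p x := by
  simp only [dot, Finset.mul_sum, ← mul_assoc, mul_div_cancel₀ _ ha]

/-- Finiteness of the Fenchel dual `v̄(q)`: the net utilities `u(x) − ⟨q,x⟩`, `x ≥ 0`, are bounded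
above. Where it fails, `fenchelDual u q` is the junk value `0` rather than `+∞`. -/
def HasFiniteFenchelDual (u : (Fin K → ℝ) → ℝ) (q : Fin K → ℝ) : Prop :=
  BddAbove ((fun x => u x - dot q x) '' {x : Fin K → ℝ | ∀ k, 0 ≤ x k})

theorem sub_dot_le_fenchelDual {u : (Fin K → ℝ) → ℝ} {q y : Fin K → ℝ}
    (hfin : HasFiniteFenchelDual u q) (hy : ∀ k, 0 ≤ y k) :
    u y - dot q y ≤ fenchelDual u q :=
  le_csSup hfin ⟨y, hy, rfl⟩

theorem mul_le_dot_add_mul_fenchelDual {u : (Fin K → ℝ) → ℝ} {a : ℝ} {p y : Fin K → ℝ}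
    (ha : 0 < a) (hfin : HasFiniteFenchelDual u (fun k => p k / a)) (hy : ∀ k, 0 ≤ y k) :
    a * u y ≤ dot p y + a * fenchelDual u (fun k => p k / a) := by
  have h := mul_le_mul_of_nonneg_left (sub_dot_le_fenchelDual hfin hy) ha.le
  rw [mul_sub, mul_dot_div ha.ne'] at h
  linarith

/-- Feasibility of an allocation for the total endowment `w`: every bundle is nonnegative and
aggregate consumption is at most `w`, so goods may be disposed of freely. -/
def IsFeasible (x : Fin N → Fin K → ℝ) (w : Fin K → ℝ) : Prop :=
  (∀ i k, 0 ≤ x i k) ∧ ∀ k, ∑ i, x i k ≤ w k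

/-- Utilitarian social welfare `W_α(w)`, the supremum of `Σ_i α_i·u_i(x_i)` over the allocations
feasible for `w`. As a supremum in `ℝ` it is `0` when no allocation is feasible or the welfare
sums are unbounded. -/
def socialWelfare (u : Fin N → (Fin K → ℝ) → ℝ) (α : Fin N → ℝ) (w : Fin K → ℝ) : ℝ :=
  sSup ((fun x : Fin N → Fin K → ℝ => ∑ i, α i * u i (x i)) '' {x | IsFeasible x w})

theorem isFeasible_zero {w : Fin K → ℝ} (hw : ∀ k, 0 ≤ w k) :
    IsFeasible (0 : Fin N → Fin K → ℝ) w :=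
  ⟨fun _ _ => le_rfl, by simpa using hw⟩

theorem IsFeasible.sum_dot_le {x : Fin N → Fin K → ℝ} {w p : Fin K → ℝ} (hx : IsFeasible x w)
    (hp : ∀ k, 0 ≤ p k) : ∑ i, dot p (x i) ≤ dot p w := by
  simp only [dot_eq_dotProduct, ← dotProduct_sum]
  exact dotProduct_le_dotProduct_of_nonneg_left (fun k => by simpa using hx.2 k) hp

section Duality

variable {u : Fin N → (Fin K → ℝ) → ℝ} {α : Fin N → ℝ} {x : Fin N → Fin K → ℝ}
  {p w w' : Fin K → ℝ}

theorem potential_nonpos (hα : ∀ i, 0 < α i) (hp : ∀ k, 0 ≤ p k)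
    (hfin : ∀ i, HasFiniteFenchelDual (u i) (fun k => p k / α i))
    (hx : IsFeasible x w) : potential u α x p w ≤ 0 := by
  have hsum : ∑ i, α i * u i (x i) ≤
      ∑ i, dot p (x i) + ∑ i, α i * fenchelDual (u i) (fun k => p k / α i) := by
    rw [← Finset.sum_add_distrib]
    exact Finset.sum_le_sum fun i _ =>
      mul_le_dot_add_mul_fenchelDual (hα i) (hfin i) (hx.1 i)
  have hcost := hx.sum_dot_le hp
  rw [potential]
  linarith

theorem socialWelfare_le_dot_add_sum_fenchelDual (hα : ∀ i, 0 < α i) (hp : ∀ k, 0 ≤ p k)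
    (hfin : ∀ i, HasFiniteFenchelDual (u i) (fun k => p k / α i))
    (hw : ∀ k, 0 ≤ w k) :
    socialWelfare u α w ≤ dot p w + ∑ i, α i * fenchelDual (u i) (fun k => p k / α i) := by
  refine csSup_le ⟨_, 0, isFeasible_zero hw, rfl⟩ ?_
  rintro _ ⟨x, hx, rfl⟩
  have hpot := potential_nonpos hα hp hfin hx
  rw [potential] at hpot
  linarith

theorem socialWelfare_eq_of_potential_eq_zero (hα : ∀ i, 0 < α i) (hp : ∀ k, 0 ≤ p k)
    (hfin : ∀ i, HasFiniteFenchelDual (u i) (fun k => p k / α i))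
    (hx : IsFeasible x w) (hY : potential u α x p w = 0) :
    socialWelfare u α w = ∑ i, α i * u i (x i) := by
  refine IsGreatest.csSup_eq ⟨⟨x, hx, rfl⟩, ?_⟩
  rintro _ ⟨y, hy, rfl⟩
  have hpot : potential u α y p w ≤ potential u α x p w :=
    hY ▸ potential_nonpos hα hp hfin hy
  simpa only [potential, sub_le_sub_iff_right] using hpot

theorem socialWelfare_le_add_dot_sub (hα : ∀ i, 0 < α i) (hp : ∀ k, 0 ≤ p k)
    (hfin : ∀ i, HasFiniteFenchelDual (u i) (fun k => p k / α i))
    (hx : IsFeasible x w) (hY : potential u α x p w = 0) (hw' : ∀ k, 0 ≤ w' k) :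
    socialWelfare u α w' ≤ socialWelfare u α w + dot p (w' - w) := by
  have hbound := socialWelfare_le_dot_add_sum_fenchelDual hα hp hfin hw'
  have hattained := socialWelfare_eq_of_potential_eq_zero hα hp hfin hx hY
  rw [potential] at hY
  rw [dot_sub]
  linarith

end Duality

theorem eq_of_hasFDerivAt_of_le_add_dot_sub {f : (Fin K → ℝ) → ℝ} {g p w : Fin K → ℝ}
    (hw : ∀ k, 0 < w k)
    (hg : HasFDerivAt f (∑ k, g k • (ContinuousLinearMap.proj k : (Fin K → ℝ) →L[ℝ] ℝ)) w)
    (hsuper : ∀ w' : Fin K → ℝ, (∀ k, 0 ≤ w' k) → f w' ≤ f w + dot p (w' - w)) :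
    g = p := by
  have hL : ∀ᶠ w' in 𝓝 w, f w' ≤ f w +
      (∑ k, p k • (ContinuousLinearMap.proj k : (Fin K → ℝ) →L[ℝ] ℝ)) (w' - w) := by
    filter_upwards [pi_Ici_mem_nhds hw] with w' hw'
    rw [sum_smul_proj_apply]
    exact hsuper w' hw'
  refine dotProduct_eq g p fun y => ?_
  simpa only [sum_smul_proj_apply, dot_eq_dotProduct] using
    DFunLike.congr_fun (eq_of_hasFDerivAt_of_eventually_le_add hg hL) y

theorem walrasian_price_is_gradient_of_welfare_general
    (u : Fin N → (Fin K → ℝ) → ℝ) {α : Fin N → ℝ} (hα : ∀ i, 0 < α i)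
    {w : Fin K → ℝ} (hw : ∀ k, 0 < w k)
    {x : Fin N → Fin K → ℝ} (hx : IsFeasible x w)
    {p : Fin K → ℝ} (hp : ∀ k, 0 ≤ p k)
    (hfin : ∀ i, HasFiniteFenchelDual (u i) (fun k => p k / α i))
    (hY : potential u α x p w = 0) :
    socialWelfare u α w = ∑ i, α i * u i (x i) ∧
    (∀ w' : Fin K → ℝ, (∀ k, 0 ≤ w' k) →
      socialWelfare u α w' ≤ socialWelfare u α w + dot p (w' - w)) ∧
    (∀ g : Fin K → ℝ,
      HasFDerivAt (socialWelfare u α)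
        (∑ k, g k • (ContinuousLinearMap.proj k : (Fin K → ℝ) →L[ℝ] ℝ)) w →
      g = p) := by
  have hsuper : ∀ w' : Fin K → ℝ, (∀ k, 0 ≤ w' k) →
      socialWelfare u α w' ≤ socialWelfare u α w + dot p (w' - w) :=
    fun _ hw' => socialWelfare_le_add_dot_sub hα hp hfin hx hY hw'
  exact ⟨socialWelfare_eq_of_potential_eq_zero hα hp hfin hx hY, hsuper,
    fun _ hg => eq_of_hasFDerivAt_of_le_add_dot_sub hw hg hsuper⟩

end ExchangeEconomy

/-- Corollary 2: the Walrasian price is a supergradient (and, where it exists,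
the gradient) of utilitarian social welfare `W_α` at the total endowment `w`. -/
theorem walrasian_price_is_gradient_of_welfare {N K : ℕ}
    (u : Fin N → (Fin K → ℝ) → ℝ) (hu : ∀ i, IsUtility (u i))
    (α : Fin N → ℝ) (hα : ∀ i, 0 < α i)
    (w : Fin K → ℝ) (hw : ∀ k, 0 < w k)
    (x : Fin N → Fin K → ℝ) (hx : ∀ i k, 0 ≤ x i k)
    (hfeas : ∀ k, ∑ i, x i k ≤ w k)
    (p : Fin K → ℝ) (hp : ∀ k, 0 ≤ p k)
    (hattain : ∀ i, ∃ z : Fin K → ℝ, (∀ k, 0 ≤ z k) ∧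
      ∀ y : Fin K → ℝ, (∀ k, 0 ≤ y k) →
        u i y - dot (fun k => p k / α i) y ≤ u i z - dot (fun k => p k / α i) z)
    (hY : potential u α x p w = 0)
    (W : (Fin K → ℝ) → ℝ)
    (hW : ∀ w' : Fin K → ℝ,
      W w' = sSup ((fun x' : Fin N → Fin K → ℝ => ∑ i, α i * u i (x' i)) ''
        {x' : Fin N → Fin K → ℝ | (∀ i k, 0 ≤ x' i k) ∧ ∀ k, ∑ i, x' i k ≤ w' k})) :
    W w = ∑ i, α i * u i (x i) ∧
    (∀ w' : Fin K → ℝ, (∀ k, 0 ≤ w' k) →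
      W w' ≤ W w + dot p (fun k => w' k - w k)) ∧
    (∀ g : Fin K → ℝ,
      HasFDerivAt W (∑ k, g k • (ContinuousLinearMap.proj k : (Fin K → ℝ) →L[ℝ] ℝ)) w →
      g = p) := by
  obtain rfl : W = socialWelfare u α := funext hW
  exact walrasian_price_is_gradient_of_welfare_general u hα hw ⟨hx, hfeas⟩ hp
    (fun i => let ⟨_, _, hz⟩ := hattain i; ⟨_, Set.forall_mem_image.2 hz⟩) hY
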